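/- Second q-Hankel image of a q-Laguerre function: for every real ν > −1, every j ∈ ℕ, every γ > 0 and every real r > 0, the bilateral series defining the infinite Jackson integral below converges absolutely and ∫_0^{γ·∞} d_q t · ( J^{(2)}_ν(qrt|q²)/(rt)^ν ) · t^{2ν+1} · 𝓛^{(ν)}_j(q²t²/(1+q)|q^{−2}) · e_{q²}(−q²t²/(1+q)) = d · ( q^{−(j+1)(j+2ν+2)} / [j]_{q²}! ) · ( r^{2j}/(1+q)^j ) · E_{q²}(−r²/(1+q)), where d = ( q^{(ν+1)(ν+2)} / ((1+q)^ν Γ_{q²}(ν+1)) ) · ∫_0^{γ·∞} d_q t · t^{2ν+1} e_{q²}(−q²t²/(1+q)). -/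

import Mathlib

open scoped BigOperators

noncomputable section

/-- The q-number `[u]_q = (q^u - 1)/(q - 1)`. -/
def qNum (q u : ℝ) : ℝ := (q ^ u - 1) / (q - 1)

/-- The q-factorial `[n]_q! = ∏_{i=1}^n [i]_q`. -/
def qFact (q : ℝ) (n : ℕ) : ℝ := ∏ i ∈ Finset.range n, qNum q ((i : ℝ) + 1)

/-- The q-Gamma function `Γ_q(t) = (1-q)^{1-t} ∏_{k=0}^∞ (1-q^{k+1})/(1-q^{k+t})`. -/
def qGamma (q t : ℝ) : ℝ :=
  (1 - q) ^ (1 - t) * ∏' k : ℕ, (1 - q ^ (k + 1)) / (1 - q ^ ((k : ℝ) + t))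

/-- The q-derivative `∂^q_t f(t) = (f(qt) - f(t))/((q-1)t)`.
The `q⁻¹`-derivative is `qDeriv q⁻¹`. -/
def qDeriv (q : ℝ) (f : ℝ → ℝ) (t : ℝ) : ℝ := (f (q * t) - f t) / ((q - 1) * t)

/-- The q-Pochhammer symbol `(a; q)_k = ∏_{l=0}^{k-1} (1 - a q^l)`. -/
def qPoch (a q : ℝ) (k : ℕ) : ℝ := ∏ l ∈ Finset.range k, (1 - a * q ^ l)

/-- The q-exponential `E_q(t) = ∑_{j=0}^∞ q^{j(j-1)/2} t^j/[j]_q!`. -/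
def qExpE (q t : ℝ) : ℝ := ∑' j : ℕ, q ^ (j * (j - 1) / 2) * t ^ j / qFact q j

/-- `e_q(-u) := 1/E_q(u)` (intended for `u ≥ 0`); `qExpe q u` denotes `e_q(-u)`. -/
def qExpe (q u : ℝ) : ℝ := (qExpE q u)⁻¹

/-- The first q-Bessel function `J^{(1)}_ν(x|q²)`. -/
def qBessel1 (q ν x : ℝ) : ℝ :=
  (x / (1 + q)) ^ ν *
    ∑' i : ℕ, (-1 : ℝ) ^ i / (qFact (q ^ 2) i * qGamma (q ^ 2) ((i : ℝ) + ν + 1)) *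
      (x / (1 + q)) ^ (2 * i)

/-- The second q-Bessel function `J^{(2)}_ν(x|q²)`. -/
def qBessel2 (q ν x : ℝ) : ℝ :=
  q ^ (ν ^ 2) * (x / (1 + q)) ^ ν *
    ∑' i : ℕ, q ^ (2 * (i : ℝ) * ((i : ℝ) + ν)) * (-1 : ℝ) ^ i /
        (qFact (q ^ 2) i * qGamma (q ^ 2) ((i : ℝ) + ν + 1)) *
      (x / (1 + q)) ^ (2 * i)

/-- The q-Laguerre polynomial `𝓛^{(α)}_j(u|q²)`. -/
def qLaguerre (q α : ℝ) (j : ℕ) (u : ℝ) : ℝ :=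
  ∑ i ∈ Finset.range (j + 1),
    q ^ ((j - i) * (j - i + 1)) * (-u) ^ i / (qFact (q ^ 2) (j - i) * qFact (q ^ 2) i) *
      (qPoch (q ^ (2 * (i : ℝ) + 2 * α + 2)) (q ^ 2) (j - i) / (1 - q ^ 2) ^ (j - i))

/-- The q-Laguerre polynomial `𝓛^{(α)}_j(u|q^{-2})`. -/
def qLaguerreInv (q α : ℝ) (j : ℕ) (u : ℝ) : ℝ :=
  q ^ (-(j : ℝ) * ((j : ℝ) + 1 + 2 * α)) *
    ∑ i ∈ Finset.range (j + 1),
      q ^ (2 * (i : ℝ) * ((i : ℝ) + α)) * (-u) ^ i / (qFact (q ^ 2) (j - i) * qFact (q ^ 2) i) *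
        (qPoch (q ^ (2 * (i : ℝ) + 2 * α + 2)) (q ^ 2) (j - i) / (1 - q ^ 2) ^ (j - i))

/-- The finite Jackson q-integral `∫_0^a f(t) d_q t = (1-q) a ∑_{k=0}^∞ f(q^k a) q^k`. -/
def jackson (q a : ℝ) (f : ℝ → ℝ) : ℝ := (1 - q) * a * ∑' k : ℕ, f (q ^ k * a) * q ^ k

/-- The infinite Jackson q-integral `∫_0^{γ·∞} f(t) d_q t = (1-q) γ ∑_{k=-∞}^∞ f(q^k γ) q^k`. -/
def jacksonInf (q γ : ℝ) (f : ℝ → ℝ) : ℝ := (1 - q) * γ * ∑' k : ℤ, f (q ^ k * γ) * q ^ k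

/-- The first q-Hankel transform `𝓗̄^{q,β}_ν`. -/
def hankel1 (q μ ν β : ℝ) (f : ℝ → ℝ) (t : ℝ) : ℝ :=
  (1 + q) / μ * jackson q (Real.sqrt (μ / ((1 - q ^ 2) * β)))
    (fun r => qBessel1 q ν ((1 + q) / μ * (r * t)) / (r * t) ^ ν * r ^ (2 * ν + 1) * f r)

/-- The second q-Hankel transform `𝓗^{q,γ}_ν`. -/
def hankel2 (q μ ν γ : ℝ) (f : ℝ → ℝ) (r : ℝ) : ℝ :=
  (1 + q) / μ * jacksonInf q γ
    (fun t => qBessel2 q ν (q * ((1 + q) / μ) * (r * t)) / (r * t) ^ ν * t ^ (2 * ν + 1) * f t)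

/-!
Put `p = q²`, `u = q²t²/(1+q)` and `R = r²/(1+q)`. On the Jackson lattice the weight
`t^(2ν+1) e_p(-u)` satisfies the q-Pearson equation `w(k+1) = p^(ν+1) (1 + (1-p) u_k) w(k)`, and
shifting the bilateral sum by one step turns it into a two-term recurrence which determines all
moments up to the total mass. Up to a constant, the Bessel kernel is the series of `E_p(-R u)` with
its `i`-th term divided by the `i`-th moment. By the q-Chu–Vandermonde formula, integrating `u^i`
against the q-Laguerre polynomial of degree `j` gives the `i`-th moment times a multiple of
`(p^(-i); p)_j`. This vanishes for `i < j`, and after the substitution `i ↦ i + j` the remaining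
series is a multiple of `R^j E_p(-R)`. The coefficients `p^(i(i-1)/2)` of `E_p` dominate every
geometric factor produced by the moments, so the double series converges absolutely and the two
summations may be exchanged.
-/

section Summation

open Filter

lemma summable_int_of_ratio_norm_eventually_le {E : Type*} [SeminormedAddCommGroup E]
    [CompleteSpace E] {f : ℤ → E} {a b : ℝ} (ha : a < 1) (hb : b < 1)
    (hright : ∀ᶠ n : ℕ in atTop, ‖f (n + 1)‖ ≤ a * ‖f n‖)
    (hleft : ∀ᶠ n : ℕ in atTop, ‖f (-(n + 1))‖ ≤ b * ‖f (-n)‖) : Summable f :=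
  .of_nat_of_neg
    (summable_of_ratio_norm_eventually_le ha (by exact_mod_cast hright))
    (summable_of_ratio_norm_eventually_le hb (by exact_mod_cast hleft))

lemma hasSum_tsum_of_hasSum_prod {ι κ E : Type*} [NormedAddCommGroup E] [CompleteSpace E]
    {f : ι × κ → E} {g : ι → E} {a : E} (hf : Summable f)
    (hrow : ∀ i, HasSum (fun k => f (i, k)) (g i)) (hg : HasSum g a) :
    HasSum (fun k => ∑' i, f (i, k)) a := by
  have hfa : HasSum f a := by
    simpa only [(hf.hasSum.prod_fiberwise hrow).unique hg] using hf.hasSum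
  have hswap : HasSum (fun ki : κ × ι => f (ki.2, ki.1)) a :=
    (Equiv.prodComm κ ι).hasSum_iff.mpr hfa
  exact hswap.prod_fiberwise fun k => (hswap.summable.prod_factor k).hasSum

end Summation

section Exponents

lemma choose_two_succ (n : ℕ) : (n + 1).choose 2 = n.choose 2 + n := by
  rw [Nat.choose_succ_succ' n 1, Nat.choose_one_right, add_comm]

lemma choose_two_add (m n : ℕ) : (m + n).choose 2 = m.choose 2 + n.choose 2 + m * n := by
  induction n with
  | zero => simp
  | succ n ih => rw [← add_assoc, choose_two_succ, ih, choose_two_succ]; ring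

lemma two_mul_choose_two_add_self (n : ℕ) : 2 * n.choose 2 + n = n * n := by
  induction n with
  | zero => rfl
  | succ n ih => rw [choose_two_succ]; linarith

end Exponents

section QFactorial

variable {p : ℝ}

lemma qNum_natCast_add_one (p : ℝ) (n : ℕ) :
    qNum p ((n : ℝ) + 1) = (1 - p ^ (n + 1)) / (1 - p) := by
  rw [qNum, ← Nat.cast_add_one, Real.rpow_natCast, ← neg_div_neg_eq, neg_sub, neg_sub]

lemma qFact_zero (p : ℝ) : qFact p 0 = 1 := Finset.prod_range_zero _

lemma qFact_succ (p : ℝ) (n : ℕ) :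
    qFact p (n + 1) = qFact p n * ((1 - p ^ (n + 1)) / (1 - p)) := by
  rw [qFact, Finset.prod_range_succ, qNum_natCast_add_one, qFact]

lemma one_sub_pow_succ_pos (hp0 : 0 ≤ p) (hp1 : p < 1) (n : ℕ) : 0 < 1 - p ^ (n + 1) :=
  sub_pos.mpr (pow_lt_one₀ hp0 hp1 n.succ_ne_zero)

lemma one_le_one_sub_pow_succ_div (hp0 : 0 ≤ p) (hp1 : p < 1) (n : ℕ) :
    1 ≤ (1 - p ^ (n + 1)) / (1 - p) := by
  rw [one_le_div (sub_pos.mpr hp1)]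
  exact sub_le_sub_left (pow_le_of_le_one hp0 hp1.le n.succ_ne_zero) 1

lemma qFact_pos (hp0 : 0 ≤ p) (hp1 : p < 1) (n : ℕ) : 0 < qFact p n := by
  refine Finset.prod_pos fun i _ => ?_
  rw [qNum_natCast_add_one]
  exact one_pos.trans_le (one_le_one_sub_pow_succ_div hp0 hp1 i)

end QFactorial

section QExponential

open Filter

variable {p : ℝ}

/-- The Taylor coefficients of `E_p`; the exponent `i(i-1)/2` is encoded as `i.choose 2`. -/
def qExpECoeff (p : ℝ) (i : ℕ) : ℝ := p ^ i.choose 2 / qFact p i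

lemma qExpECoeff_zero (p : ℝ) : qExpECoeff p 0 = 1 := by simp [qExpECoeff, qFact_zero]

lemma qExpECoeff_nonneg (hp0 : 0 ≤ p) (hp1 : p < 1) (i : ℕ) : 0 ≤ qExpECoeff p i :=
  div_nonneg (pow_nonneg hp0 _) (qFact_pos hp0 hp1 i).le

lemma qExpECoeff_succ_mul (hp0 : 0 ≤ p) (hp1 : p < 1) (i : ℕ) :
    qExpECoeff p (i + 1) * (1 - p ^ (i + 1)) = qExpECoeff p i * p ^ i * (1 - p) := by
  have hfact := (qFact_pos hp0 hp1 i).ne'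
  have hnum := (one_sub_pow_succ_pos hp0 hp1 i).ne'
  have hden : 1 - p ≠ 0 := (sub_pos.mpr hp1).ne'
  rw [qExpECoeff, qExpECoeff, choose_two_succ, pow_add, qFact_succ]
  field_simp

lemma qExpECoeff_succ_le (hp0 : 0 ≤ p) (hp1 : p < 1) (i : ℕ) :
    qExpECoeff p (i + 1) ≤ qExpECoeff p i * p ^ i := by
  have hfact := qFact_pos hp0 hp1 i
  rw [qExpECoeff, qExpECoeff, choose_two_succ, pow_add, qFact_succ, div_mul_eq_mul_div]
  gcongr
  exact le_mul_of_one_le_right hfact.le (one_le_one_sub_pow_succ_div hp0 hp1 i)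

lemma summable_qExpECoeff_mul_pow (hp0 : 0 ≤ p) (hp1 : p < 1) (t : ℝ) :
    Summable fun i => qExpECoeff p i * t ^ i := by
  have hlim : Tendsto (fun n : ℕ => p ^ n * |t|) atTop (nhds 0) := by
    simpa using (tendsto_pow_atTop_nhds_zero_of_lt_one hp0 hp1).mul_const |t|
  refine summable_of_ratio_norm_eventually_le (r := 1 / 2) (by norm_num) ?_
  filter_upwards [hlim.eventually_le_const (show (0 : ℝ) < 1 / 2 by norm_num)] with n hn
  have hnorm (i : ℕ) : ‖qExpECoeff p i * t ^ i‖ = qExpECoeff p i * |t| ^ i := by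
    rw [norm_mul, norm_pow, Real.norm_of_nonneg (qExpECoeff_nonneg hp0 hp1 i), Real.norm_eq_abs]
  have hcoeff := qExpECoeff_nonneg hp0 hp1 n
  rw [hnorm, hnorm]
  calc qExpECoeff p (n + 1) * |t| ^ (n + 1)
      ≤ qExpECoeff p n * p ^ n * |t| ^ (n + 1) := by
        gcongr; exact qExpECoeff_succ_le hp0 hp1 n
    _ = p ^ n * |t| * (qExpECoeff p n * |t| ^ n) := by ring
    _ ≤ 1 / 2 * (qExpECoeff p n * |t| ^ n) := by gcongr

lemma hasSum_qExpE (hp0 : 0 ≤ p) (hp1 : p < 1) (t : ℝ) :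
    HasSum (fun i => qExpECoeff p i * t ^ i) (qExpE p t) := by
  convert! (summable_qExpECoeff_mul_pow hp0 hp1 t).hasSum using 1
  simp only [qExpE, qExpECoeff, Nat.choose_two_right, div_mul_eq_mul_div]

lemma qExpE_pos (hp0 : 0 ≤ p) (hp1 : p < 1) {t : ℝ} (ht : 0 ≤ t) : 0 < qExpE p t := by
  have hle := le_hasSum (hasSum_qExpE hp0 hp1 t) 0 fun i _ =>
    mul_nonneg (qExpECoeff_nonneg hp0 hp1 i) (pow_nonneg ht i)
  rw [qExpECoeff_zero, pow_zero, one_mul] at hle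
  exact one_pos.trans_le hle

lemma qExpE_eq_mul_qExpE_mul (hp0 : 0 ≤ p) (hp1 : p < 1) (t : ℝ) :
    qExpE p t = (1 + (1 - p) * t) * qExpE p (p * t) := by
  have hterm (i : ℕ) :
      qExpECoeff p (i + 1) * t ^ (i + 1) - qExpECoeff p (i + 1) * (p * t) ^ (i + 1) =
        (1 - p) * t * (qExpECoeff p i * (p * t) ^ i) := by
    rw [mul_pow, mul_pow]
    linear_combination t ^ (i + 1) * qExpECoeff_succ_mul hp0 hp1 i
  have hdiff := (hasSum_nat_add_iff' 1).mpr
    ((hasSum_qExpE hp0 hp1 t).sub (hasSum_qExpE hp0 hp1 (p * t)))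
  simp only [hterm, Finset.sum_range_one, pow_zero, sub_self, sub_zero] at hdiff
  linear_combination hdiff.unique ((hasSum_qExpE hp0 hp1 (p * t)).mul_left ((1 - p) * t))

lemma qExpe_mul_eq (hp0 : 0 ≤ p) (hp1 : p < 1) {t : ℝ} (ht : 0 ≤ t) :
    qExpe p (p * t) = (1 + (1 - p) * t) * qExpe p t := by
  have hfactor : 0 < 1 + (1 - p) * t := by
    have := mul_nonneg (sub_pos.mpr hp1).le ht
    linarith
  rw [qExpe, qExpe, qExpE_eq_mul_qExpE_mul hp0 hp1 t, mul_inv, mul_inv_cancel_left₀ hfactor.ne']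

end QExponential

section QPochhammer

variable {p : ℝ}

lemma qPoch_zero (a p : ℝ) : qPoch a p 0 = 1 := Finset.prod_range_zero _

lemma qPoch_succ (a p : ℝ) (n : ℕ) : qPoch a p (n + 1) = qPoch a p n * (1 - a * p ^ n) :=
  Finset.prod_range_succ _ n

lemma qPoch_add (a p : ℝ) (m n : ℕ) :
    qPoch a p (m + n) = qPoch a p m * qPoch (a * p ^ m) p n := by
  simp only [qPoch, Finset.prod_range_add, pow_add, mul_assoc]

lemma qPoch_succ' (a p : ℝ) (n : ℕ) : qPoch a p (n + 1) = (1 - a) * qPoch (a * p) p n := by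
  rw [add_comm, qPoch_add, qPoch_succ, qPoch_zero, pow_zero, pow_one, mul_one, one_mul]

lemma mul_pow_lt_one (hp0 : 0 ≤ p) (hp1 : p < 1) {a : ℝ} (ha0 : 0 ≤ a) (ha1 : a < 1) (n : ℕ) :
    a * p ^ n < 1 :=
  (mul_le_of_le_one_right ha0 (pow_le_one₀ hp0 hp1.le)).trans_lt ha1

lemma qPoch_pos (hp0 : 0 ≤ p) (hp1 : p < 1) {a : ℝ} (ha0 : 0 ≤ a) (ha1 : a < 1) (n : ℕ) :
    0 < qPoch a p n :=
  Finset.prod_pos fun l _ => sub_pos.mpr (mul_pow_lt_one hp0 hp1 ha0 ha1 l)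

lemma qPoch_le_one (hp0 : 0 ≤ p) (hp1 : p < 1) {a : ℝ} (ha0 : 0 ≤ a) (ha1 : a < 1) (n : ℕ) :
    qPoch a p n ≤ 1 :=
  Finset.prod_le_one (fun l _ => (sub_pos.mpr (mul_pow_lt_one hp0 hp1 ha0 ha1 l)).le)
    fun l _ => sub_le_self 1 (mul_nonneg ha0 (pow_nonneg hp0 l))

lemma qPoch_inv_pow_eq_zero (hp : p ≠ 0) {i j : ℕ} (hij : i < j) : qPoch (p ^ i)⁻¹ p j = 0 :=
  Finset.prod_eq_zero (Finset.mem_range.mpr hij) <| by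
    rw [inv_mul_cancel₀ (pow_ne_zero i hp), sub_self]

lemma summable_neg_mul_pow (hp0 : 0 ≤ p) (hp1 : p < 1) (a : ℝ) :
    Summable fun k : ℕ => -(a * p ^ k) :=
  ((summable_geometric_of_lt_one hp0 hp1).mul_left a).neg

lemma multipliable_one_sub_mul_pow (hp0 : 0 ≤ p) (hp1 : p < 1) (a : ℝ) :
    Multipliable fun k : ℕ => 1 - a * p ^ k := by
  simpa only [sub_eq_add_neg] using
    Real.multipliable_one_add_of_summable (summable_neg_mul_pow hp0 hp1 a)

lemma tprod_one_sub_mul_pow_ne_zero (hp0 : 0 ≤ p) (hp1 : p < 1) {a : ℝ} (ha0 : 0 ≤ a)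
    (ha1 : a < 1) : ∏' k : ℕ, (1 - a * p ^ k) ≠ 0 := by
  simp only [sub_eq_add_neg]
  refine tprod_one_add_ne_zero_of_summable (fun k => ?_) (summable_neg_mul_pow hp0 hp1 a).norm
  have := mul_pow_lt_one hp0 hp1 ha0 ha1 k
  linarith

lemma qPoch_mul_tprod (hp0 : 0 ≤ p) (hp1 : p < 1) (a : ℝ) (n : ℕ) :
    qPoch a p n * ∏' k : ℕ, (1 - a * p ^ n * p ^ k) = ∏' k : ℕ, (1 - a * p ^ k) := by
  have hshift : (fun k : ℕ => 1 - a * p ^ n * p ^ k) = fun k => 1 - a * p ^ (k + n) := by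
    funext k; ring
  have hmult := multipliable_one_sub_mul_pow hp0 hp1 (a * p ^ n)
  rw [hshift] at hmult ⊢
  exact hmult.prod_mul_tprod_nat_mul'

end QPochhammer

section QGamma

variable {p : ℝ}

lemma qGamma_eq_tprod_div_tprod (hp0 : 0 < p) (hp1 : p < 1) {t : ℝ} (ht : 0 < t) :
    qGamma p t = (1 - p) ^ (1 - t) *
      ((∏' k : ℕ, (1 - p * p ^ k)) / ∏' k : ℕ, (1 - p ^ t * p ^ k)) := by
  have hpow (k : ℕ) : p ^ ((k : ℝ) + t) = p ^ t * p ^ k := by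
    rw [Real.rpow_add hp0, Real.rpow_natCast, mul_comm]
  simp only [qGamma, hpow, pow_succ']
  rw [(multipliable_one_sub_mul_pow hp0.le hp1 p).tprod_div₀
    (multipliable_one_sub_mul_pow hp0.le hp1 (p ^ t))]
  exact tprod_one_sub_mul_pow_ne_zero hp0.le hp1 (Real.rpow_nonneg hp0.le t)
    (Real.rpow_lt_one hp0.le hp1 ht)

lemma qGamma_add_natCast (hp0 : 0 < p) (hp1 : p < 1) {t : ℝ} (ht : 0 < t) (n : ℕ) :
    qGamma p (t + n) = qGamma p t * (qPoch (p ^ t) p n / (1 - p) ^ n) := by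
  have hp : 0 < 1 - p := sub_pos.mpr hp1
  have hpt := Real.rpow_lt_one hp0.le hp1 ht
  have hpoch := (qPoch_pos hp0.le hp1 (Real.rpow_nonneg hp0.le t) hpt n).ne'
  rw [qGamma_eq_tprod_div_tprod hp0 hp1 ht, qGamma_eq_tprod_div_tprod hp0 hp1 (by positivity),
    ← qPoch_mul_tprod hp0.le hp1 (p ^ t) n, Real.rpow_add hp0, Real.rpow_natCast, ← sub_sub,
    Real.rpow_sub hp, Real.rpow_natCast]
  field_simp

end QGamma

section ChuVandermonde

open Finset.HasAntidiagonal (antidiagonal mem_antidiagonal)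

variable {p : ℝ}

/-- The `(k, m)` term of the q-Chu–Vandermonde sum, normalised so that no division by `z` or by a
Pochhammer symbol occurs. -/
def chuVandermondeTerm (p y z : ℝ) (km : ℕ × ℕ) : ℝ :=
  qExpECoeff p km.1 * (-z) ^ km.1 * qPoch y p km.1 *
    (qPoch (y * z * p ^ km.1) p km.2 / qFact p km.2)

lemma chuVandermondeTerm_succ_right (hp0 : 0 ≤ p) (hp1 : p < 1) (y z : ℝ) (k m : ℕ) :
    (1 - p ^ (m + 1)) * chuVandermondeTerm p y z (k, m + 1) =
      (1 - p) * (1 - y * z * p ^ (k + m)) * chuVandermondeTerm p y z (k, m) := by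
  have hfact := (qFact_pos hp0 hp1 m).ne'
  have hnum := (one_sub_pow_succ_pos hp0 hp1 m).ne'
  have hden : 1 - p ≠ 0 := (sub_pos.mpr hp1).ne'
  simp only [chuVandermondeTerm, qPoch_succ, qFact_succ, mul_assoc (y * z), ← pow_add]
  field_simp

lemma chuVandermondeTerm_succ_left (hp0 : 0 ≤ p) (hp1 : p < 1) (y z : ℝ) (k m : ℕ) :
    p ^ m * (1 - p ^ (k + 1)) * chuVandermondeTerm p y z (k + 1, m) =
      -(1 - p) * z * (1 - y) * p ^ (k + m) * chuVandermondeTerm p (y * p) z (k, m) := by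
  have hbase : y * z * p ^ (k + 1) = y * p * z * p ^ k := by ring
  simp only [chuVandermondeTerm, qPoch_succ', hbase]
  linear_combination p ^ m * (-z) ^ (k + 1) * ((1 - y) * qPoch (y * p) p k) *
    (qPoch (y * p * z * p ^ k) p m / qFact p m) * qExpECoeff_succ_mul hp0 hp1 k

/-- The recurrence comes from splitting `1 - p^(j+1) = (1 - p^m) + p^m (1 - p^k)` for
`k + m = j + 1`: the first part lowers `m`, the second lowers `k`. -/
lemma sum_chuVandermondeTerm_succ (hp0 : 0 ≤ p) (hp1 : p < 1) (y z : ℝ) (j : ℕ) :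
    (1 - p ^ (j + 1)) * ∑ km ∈ antidiagonal (j + 1), chuVandermondeTerm p y z km =
      (1 - p) * ((1 - y * z * p ^ j) *
          ∑ km ∈ antidiagonal j, chuVandermondeTerm p y z km -
        z * (1 - y) * p ^ j *
          ∑ km ∈ antidiagonal j, chuVandermondeTerm p (y * p) z km) := by
  have hsplit : (1 - p ^ (j + 1)) *
      ∑ km ∈ antidiagonal (j + 1), chuVandermondeTerm p y z km =
      ∑ km ∈ antidiagonal (j + 1), (1 - p ^ km.2) * chuVandermondeTerm p y z km +
      ∑ km ∈ antidiagonal (j + 1),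
        p ^ km.2 * (1 - p ^ km.1) * chuVandermondeTerm p y z km := by
    rw [Finset.mul_sum, ← Finset.sum_add_distrib]
    refine Finset.sum_congr rfl fun km hkm => ?_
    rw [← mem_antidiagonal.mp hkm, pow_add]
    ring
  have hright : ∑ km ∈ antidiagonal (j + 1), (1 - p ^ km.2) * chuVandermondeTerm p y z km =
      (1 - p) * (1 - y * z * p ^ j) * ∑ km ∈ antidiagonal j, chuVandermondeTerm p y z km := by
    rw [Finset.Nat.sum_antidiagonal_succ', Finset.mul_sum]
    simp only [pow_zero, sub_self, zero_mul, zero_add]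
    refine Finset.sum_congr rfl fun km hkm => ?_
    rw [chuVandermondeTerm_succ_right hp0 hp1, mem_antidiagonal.mp hkm]
  have hleft : ∑ km ∈ antidiagonal (j + 1),
      p ^ km.2 * (1 - p ^ km.1) * chuVandermondeTerm p y z km =
      -(1 - p) * z * (1 - y) * p ^ j *
        ∑ km ∈ antidiagonal j, chuVandermondeTerm p (y * p) z km := by
    rw [Finset.Nat.sum_antidiagonal_succ, Finset.mul_sum]
    simp only [pow_zero, sub_self, mul_zero, zero_mul, zero_add]
    refine Finset.sum_congr rfl fun km hkm => ?_
    rw [chuVandermondeTerm_succ_left hp0 hp1, mem_antidiagonal.mp hkm]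
  rw [hsplit, hright, hleft]
  ring

lemma sum_chuVandermondeTerm (hp0 : 0 ≤ p) (hp1 : p < 1) (y z : ℝ) (j : ℕ) :
    ∑ km ∈ antidiagonal j, chuVandermondeTerm p y z km = qPoch z p j / qFact p j := by
  induction j generalizing y with
  | zero => simp [chuVandermondeTerm, qExpECoeff_zero, qFact_zero, qPoch_zero]
  | succ j ih =>
    have hfact := (qFact_pos hp0 hp1 j).ne'
    have hnum := (one_sub_pow_succ_pos hp0 hp1 j).ne'
    have hden : 1 - p ≠ 0 := (sub_pos.mpr hp1).ne'
    apply mul_left_cancel₀ hnum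
    rw [sum_chuVandermondeTerm_succ hp0 hp1, ih, ih, qPoch_succ, qFact_succ]
    field_simp
    ring

end ChuVandermonde

section Moments

open Finset.HasAntidiagonal (antidiagonal mem_antidiagonal)

variable {p x : ℝ}

/-- The `m`-th moment of a q-Laguerre weight with parameter `x = p^(α+1)`, relative to its total
mass. -/
def qLaguerreMoment (p x : ℝ) (m : ℕ) : ℝ :=
  qPoch x p m / (x ^ m * p ^ m.choose 2 * (1 - p) ^ m)

lemma qLaguerreMoment_zero (p x : ℝ) : qLaguerreMoment p x 0 = 1 := by
  simp [qLaguerreMoment, qPoch_zero]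

lemma qLaguerreMoment_pos (hp0 : 0 < p) (hp1 : p < 1) (hx0 : 0 < x) (hx1 : x < 1) (m : ℕ) :
    0 < qLaguerreMoment p x m := by
  have : 0 < 1 - p := sub_pos.mpr hp1
  have hpoch := qPoch_pos hp0.le hp1 hx0.le hx1 m
  unfold qLaguerreMoment
  positivity

lemma qLaguerreMoment_succ_mul (hp0 : 0 < p) (hp1 : p < 1) (hx0 : 0 < x) (m : ℕ) :
    x * p ^ m * (1 - p) * qLaguerreMoment p x (m + 1) =
      (1 - x * p ^ m) * qLaguerreMoment p x m := by
  have hp : 1 - p ≠ 0 := (sub_pos.mpr hp1).ne'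
  rw [qLaguerreMoment, qLaguerreMoment, qPoch_succ, choose_two_succ, pow_add p, pow_succ x,
    pow_succ (1 - p)]
  field_simp

lemma qLaguerreMoment_add (p x : ℝ) (i l : ℕ) :
    qLaguerreMoment p x (i + l) = qLaguerreMoment p x i *
      (qPoch (x * p ^ i) p l / (x ^ l * p ^ l.choose 2 * (1 - p) ^ l)) * ((p ^ l)⁻¹) ^ i := by
  rw [qLaguerreMoment, qLaguerreMoment, qPoch_add, choose_two_add, pow_add x, pow_add (1 - p),
    pow_add p, pow_add p, mul_comm i l, pow_mul, inv_pow]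
  ring

lemma qLaguerreMoment_add_le (hp0 : 0 < p) (hp1 : p < 1) (hx0 : 0 < x) (hx1 : x < 1) (i l : ℕ) :
    qLaguerreMoment p x (i + l) ≤ qLaguerreMoment p x i *
      (x ^ l * p ^ l.choose 2 * (1 - p) ^ l)⁻¹ * ((p ^ l)⁻¹) ^ i := by
  have : 0 < 1 - p := sub_pos.mpr hp1
  have hmoment := qLaguerreMoment_pos hp0 hp1 hx0 hx1 i
  rw [qLaguerreMoment_add, div_eq_mul_inv]
  gcongr
  exact mul_le_of_le_one_left (by positivity)
    (qPoch_le_one hp0.le hp1 (by positivity) (mul_pow_lt_one hp0.le hp1 hx0.le hx1 i) l)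

/-- The power series of the second q-Bessel function, normalised to be `1` at `u = 0`: for
`x = p^(ν+1)` it is the expansion of `E_p(-u)` with its `i`-th term divided by the `i`-th
q-Laguerre moment. -/
def qBesselSeries (p x u : ℝ) : ℝ :=
  ∑' i, qExpECoeff p i * (-u) ^ i / qLaguerreMoment p x i

lemma norm_qBesselSeries_term_mul_moment_le (hp0 : 0 < p) (hp1 : p < 1) (hx0 : 0 < x)
    (hx1 : x < 1) (R : ℝ) (i l : ℕ) :
    ‖qExpECoeff p i * (-R) ^ i / qLaguerreMoment p x i‖ * qLaguerreMoment p x (i + l) ≤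
      (x ^ l * p ^ l.choose 2 * (1 - p) ^ l)⁻¹ * (qExpECoeff p i * (|R| * (p ^ l)⁻¹) ^ i) := by
  have hmoment := qLaguerreMoment_pos hp0 hp1 hx0 hx1 i
  have hcoeff := qExpECoeff_nonneg hp0.le hp1 i
  calc _ = qExpECoeff p i * |R| ^ i / qLaguerreMoment p x i * qLaguerreMoment p x (i + l) := by
        rw [norm_div, norm_mul, norm_pow, norm_neg, Real.norm_of_nonneg hcoeff,
          Real.norm_of_nonneg hmoment.le, Real.norm_eq_abs]
    _ ≤ qExpECoeff p i * |R| ^ i / qLaguerreMoment p x i * (qLaguerreMoment p x i *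
          (x ^ l * p ^ l.choose 2 * (1 - p) ^ l)⁻¹ * ((p ^ l)⁻¹) ^ i) := by
        gcongr
        exact qLaguerreMoment_add_le hp0 hp1 hx0 hx1 i l
    _ = _ := by
        rw [mul_pow]
        field_simp

/-- The coefficient of `u^l` in `qLaguerrePoly p x (l + m) u`. -/
def qLaguerrePolyCoeff (p x : ℝ) (lm : ℕ × ℕ) : ℝ :=
  qExpECoeff p lm.1 * p ^ lm.1.choose 2 * (-x) ^ lm.1 *
    (qPoch (x * p ^ lm.1) p lm.2 / ((1 - p) ^ lm.2 * qFact p lm.2))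

/-- The polynomial `qLaguerreInv q α j u` without its power of `q` in front, in terms of the base
`p = q²` and `x = p^(α+1)`. -/
def qLaguerrePoly (p x : ℝ) (j : ℕ) (u : ℝ) : ℝ :=
  ∑ lm ∈ antidiagonal j, qLaguerrePolyCoeff p x lm * u ^ lm.1

lemma qLaguerrePolyCoeff_mul_moment (hp0 : 0 < p) (hp1 : p < 1) (hx0 : 0 < x) (i l m : ℕ) :
    qLaguerrePolyCoeff p x (l, m) * qLaguerreMoment p x (i + l) =
      qLaguerreMoment p x i / (1 - p) ^ (l + m) *
        chuVandermondeTerm p (x * p ^ i) (p ^ i)⁻¹ (l, m) := by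
  have hp : 1 - p ≠ 0 := (sub_pos.mpr hp1).ne'
  have hbase : x * p ^ i * (p ^ i)⁻¹ = x := mul_inv_cancel_right₀ (pow_pos hp0 i).ne' x
  have hcomm : ((p ^ l)⁻¹) ^ i = ((p ^ i)⁻¹) ^ l := by
    rw [inv_pow, inv_pow, ← pow_mul, ← pow_mul, mul_comm]
  simp only [qLaguerrePolyCoeff, qLaguerreMoment_add, chuVandermondeTerm, hbase, hcomm, pow_add,
    neg_pow x, neg_pow (p ^ i)⁻¹]
  field_simp

lemma sum_qLaguerrePolyCoeff_mul_moment (hp0 : 0 < p) (hp1 : p < 1) (hx0 : 0 < x) (i j : ℕ) :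
    ∑ lm ∈ antidiagonal j, qLaguerrePolyCoeff p x lm * qLaguerreMoment p x (i + lm.1) =
      qLaguerreMoment p x i / (1 - p) ^ j * (qPoch (p ^ i)⁻¹ p j / qFact p j) := by
  rw [← sum_chuVandermondeTerm hp0.le hp1 (x * p ^ i), Finset.mul_sum]
  refine Finset.sum_congr rfl fun lm hlm => ?_
  rw [qLaguerrePolyCoeff_mul_moment hp0 hp1 hx0, mem_antidiagonal.mp hlm]

lemma qExpECoeff_add_mul_qPoch (hp0 : 0 < p) (hp1 : p < 1) (n j : ℕ) :
    qExpECoeff p (n + j) * qPoch (p ^ (n + j))⁻¹ p j = (-((1 - p) / p)) ^ j * qExpECoeff p n := by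
  induction j with
  | zero => simp [qPoch_zero]
  | succ j ih =>
    have hbase : (p ^ (n + j + 1))⁻¹ * p = (p ^ (n + j))⁻¹ := by
      rw [pow_succ, mul_inv, inv_mul_cancel_right₀ hp0.ne']
    have hstep : qExpECoeff p (n + j + 1) * (1 - (p ^ (n + j + 1))⁻¹) =
        -((1 - p) / p) * qExpECoeff p (n + j) := by
      have hrec := qExpECoeff_succ_mul hp0.le hp1 (n + j)
      field_simp
      linear_combination -p * hrec
    rw [← add_assoc, qPoch_succ', hbase, ← mul_assoc, hstep, mul_assoc, ih, pow_succ']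
    ring

/-- The terms with `i < j` vanish, and the remaining ones are a shifted multiple of the series of
`E_p(-R)`. -/
lemma hasSum_qExpECoeff_mul_qPoch (hp0 : 0 < p) (hp1 : p < 1) (j : ℕ) (R : ℝ) :
    HasSum (fun i => qExpECoeff p i * (-R) ^ i * qPoch (p ^ i)⁻¹ p j)
      (((1 - p) / p * R) ^ j * qExpE p (-R)) := by
  have hinit : ∑ i ∈ Finset.range j, qExpECoeff p i * (-R) ^ i * qPoch (p ^ i)⁻¹ p j = 0 :=
    Finset.sum_eq_zero fun i hi => by
      rw [qPoch_inv_pow_eq_zero hp0.ne' (Finset.mem_range.mp hi), mul_zero]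
  have hshift (n : ℕ) : qExpECoeff p (n + j) * (-R) ^ (n + j) * qPoch (p ^ (n + j))⁻¹ p j =
      ((1 - p) / p * R) ^ j * (qExpECoeff p n * (-R) ^ n) := by
    rw [mul_right_comm, qExpECoeff_add_mul_qPoch hp0 hp1, pow_add, ← neg_mul_neg ((1 - p) / p),
      mul_pow]
    ring
  rw [← hasSum_nat_add_iff' j, hinit, sub_zero]
  simpa only [hshift] using (hasSum_qExpE hp0.le hp1 (-R)).mul_left (((1 - p) / p * R) ^ j)

end Moments

/-- A positive weight `w` on nodes `s` in geometric progression which satisfies the q-Pearson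
equation of the q-Laguerre weight. With `x = p^(α+1)` the model is `w k = u^(α+1) e_p(-u)` at
`u = s k`, in which one factor `u` accounts for the mass of the Jackson measure at the node. -/
structure IsQLaguerreWeight (p x : ℝ) (s w : ℤ → ℝ) : Prop where
  base_pos : 0 < p
  base_lt_one : p < 1
  param_pos : 0 < x
  param_lt_one : x < 1
  node_pos (k : ℤ) : 0 < s k
  weight_pos (k : ℤ) : 0 < w k
  node_succ (k : ℤ) : s (k + 1) = p * s k
  weight_succ (k : ℤ) : w (k + 1) = x * (1 + (1 - p) * s k) * w k

namespace IsQLaguerreWeight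

open Filter
open Finset.HasAntidiagonal (antidiagonal)

variable {p x : ℝ} {s w : ℤ → ℝ}

lemma node_eq (h : IsQLaguerreWeight p x s w) (k : ℤ) : s k = p ^ k * s 0 := by
  induction k with
  | zero => simp
  | succ n ih => rw [h.node_succ, ih, zpow_add_one₀ h.base_pos.ne']; ring
  | pred n ih =>
    have hstep := h.node_succ (-n - 1)
    rw [sub_add_cancel, ih] at hstep
    rw [zpow_sub_one₀ h.base_pos.ne', mul_right_comm, hstep, mul_comm p,
      mul_inv_cancel_right₀ h.base_pos.ne']

lemma pow_mul_weight_pos (h : IsQLaguerreWeight p x s w) (m : ℕ) (k : ℤ) : 0 < s k ^ m * w k :=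
  mul_pos (pow_pos (h.node_pos k) m) (h.weight_pos k)

lemma pow_mul_weight_succ (h : IsQLaguerreWeight p x s w) (m : ℕ) (k : ℤ) :
    s (k + 1) ^ m * w (k + 1) = x * p ^ m * (1 + (1 - p) * s k) * (s k ^ m * w k) := by
  rw [h.node_succ, h.weight_succ]; ring

lemma exists_ratio_lt_one_right (h : IsQLaguerreWeight p x s w) (m : ℕ) :
    ∃ a < 1, ∀ᶠ n : ℕ in atTop, ‖s (n + 1) ^ m * w (n + 1)‖ ≤ a * ‖s n ^ m * w n‖ := by
  have hnode : Tendsto (fun n : ℕ => s n) atTop (nhds 0) := by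
    simp only [h.node_eq (Nat.cast _), zpow_natCast]
    simpa using (tendsto_pow_atTop_nhds_zero_of_lt_one h.base_pos.le h.base_lt_one).mul_const (s 0)
  have hratio : Tendsto (fun n : ℕ => x * p ^ m * (1 + (1 - p) * s n)) atTop
      (nhds (x * p ^ m)) := by
    simpa using ((hnode.const_mul (1 - p)).const_add 1).const_mul (x * p ^ m)
  obtain ⟨a, hxa, ha⟩ := exists_between
    (mul_pow_lt_one h.base_pos.le h.base_lt_one h.param_pos.le h.param_lt_one m)
  refine ⟨a, ha, ?_⟩
  filter_upwards [hratio.eventually_le_const hxa] with n hn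
  rw [Real.norm_of_nonneg (h.pow_mul_weight_pos m _).le,
    Real.norm_of_nonneg (h.pow_mul_weight_pos m _).le, h.pow_mul_weight_succ]
  exact mul_le_mul_of_nonneg_right hn (h.pow_mul_weight_pos m n).le

lemma eventually_ratio_le_half_left (h : IsQLaguerreWeight p x s w) (m : ℕ) :
    ∀ᶠ n : ℕ in atTop,
      ‖s (-(n + 1)) ^ m * w (-(n + 1))‖ ≤ 1 / 2 * ‖s (-n) ^ m * w (-n)‖ := by
  have hp0 := h.base_pos
  have hp : 0 < 1 - p := sub_pos.mpr h.base_lt_one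
  have hx : 0 < x * p ^ m := mul_pos h.param_pos (pow_pos hp0 m)
  have hnode : Tendsto (fun n : ℕ => s (-(n + 1))) atTop atTop := by
    have hpow := (tendsto_pow_atTop_atTop_of_one_lt
      ((one_lt_inv₀ hp0).mpr h.base_lt_one)).comp (tendsto_add_atTop_nat 1)
    refine (hpow.atTop_mul_const (h.node_pos 0)).congr fun n => ?_
    rw [h.node_eq (-(n + 1)), zpow_neg, ← inv_zpow, ← Nat.cast_add_one, zpow_natCast,
      Function.comp_apply]
  have hratio : Tendsto (fun n : ℕ => x * p ^ m * (1 + (1 - p) * s (-(n + 1)))) atTop atTop :=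
    (tendsto_atTop_add_const_left _ 1 (hnode.const_mul_atTop hp)).const_mul_atTop hx
  filter_upwards [hratio.eventually_ge_atTop 2] with n hn
  have hstep := h.pow_mul_weight_succ m (-(n + 1))
  rw [show -((n : ℤ) + 1) + 1 = -n by ring] at hstep
  rw [Real.norm_of_nonneg (h.pow_mul_weight_pos m _).le,
    Real.norm_of_nonneg (h.pow_mul_weight_pos m _).le, hstep]
  linarith [mul_le_mul_of_nonneg_right hn (h.pow_mul_weight_pos m (-(n + 1))).le]

lemma summable_pow_mul_weight (h : IsQLaguerreWeight p x s w) (m : ℕ) :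
    Summable fun k => s k ^ m * w k := by
  obtain ⟨a, ha, hright⟩ := h.exists_ratio_lt_one_right m
  exact summable_int_of_ratio_norm_eventually_le ha (by norm_num) hright
    (h.eventually_ratio_le_half_left m)

/-- Shifting the summation index by one leaves the bilateral sum unchanged, while the q-Pearson
equation expresses the shifted moment through the moments of order `m` and `m + 1`. -/
lemma mul_tsum_pow_succ_mul_weight (h : IsQLaguerreWeight p x s w) (m : ℕ) :
    x * p ^ m * (1 - p) * ∑' k, s k ^ (m + 1) * w k =
      (1 - x * p ^ m) * ∑' k, s k ^ m * w k := by
  have hterm (k : ℤ) : s (k + 1) ^ m * w (k + 1) =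
      x * p ^ m * (s k ^ m * w k) + x * p ^ m * (1 - p) * (s k ^ (m + 1) * w k) := by
    rw [h.pow_mul_weight_succ]; ring
  have hshift : ∑' k, s k ^ m * w k = ∑' k, s (k + 1) ^ m * w (k + 1) :=
    ((Equiv.addRight (1 : ℤ)).tsum_eq _).symm
  simp only [hterm] at hshift
  rw [((h.summable_pow_mul_weight m).mul_left _).tsum_add
    ((h.summable_pow_mul_weight (m + 1)).mul_left _), tsum_mul_left, tsum_mul_left] at hshift
  linear_combination -hshift

lemma hasSum_pow_mul_weight (h : IsQLaguerreWeight p x s w) (m : ℕ) :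
    HasSum (fun k => s k ^ m * w k) (qLaguerreMoment p x m * ∑' k, w k) := by
  suffices htsum : ∑' k, s k ^ m * w k = qLaguerreMoment p x m * ∑' k, w k from
    htsum ▸ (h.summable_pow_mul_weight m).hasSum
  induction m with
  | zero => simp [qLaguerreMoment_zero]
  | succ m ih =>
    have hcoeff : x * p ^ m * (1 - p) ≠ 0 :=
      (mul_pos (mul_pos h.param_pos (pow_pos h.base_pos m)) (sub_pos.mpr h.base_lt_one)).ne'
    apply mul_left_cancel₀ hcoeff
    rw [h.mul_tsum_pow_succ_mul_weight, ih, ← mul_assoc, ← mul_assoc,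
      qLaguerreMoment_succ_mul h.base_pos h.base_lt_one h.param_pos]

lemma hasSum_pow_mul_qLaguerrePoly_mul_weight (h : IsQLaguerreWeight p x s w) (i j : ℕ) :
    HasSum (fun k => s k ^ i * qLaguerrePoly p x j (s k) * w k)
      (qLaguerreMoment p x i / (1 - p) ^ j * (qPoch (p ^ i)⁻¹ p j / qFact p j) * ∑' k, w k) := by
  rw [← sum_qLaguerrePolyCoeff_mul_moment h.base_pos h.base_lt_one h.param_pos, Finset.sum_mul]
  convert! hasSum_sum fun lm (_ : lm ∈ antidiagonal j) =>
    (h.hasSum_pow_mul_weight (i + lm.1)).mul_left (qLaguerrePolyCoeff p x lm) using 2 with k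
  · rw [qLaguerrePoly, Finset.mul_sum, Finset.sum_mul]
    exact Finset.sum_congr rfl fun lm _ => by ring
  · ring

lemma summable_qBesselSeries_term_mul_pow_mul_weight (h : IsQLaguerreWeight p x s w) (R : ℝ)
    (l : ℕ) :
    Summable fun ik : ℕ × ℤ =>
      qExpECoeff p ik.1 * (-R) ^ ik.1 / qLaguerreMoment p x ik.1 *
        (s ik.2 ^ (ik.1 + l) * w ik.2) := by
  have hnorm (i : ℕ) (k : ℤ) : ‖qExpECoeff p i * (-R) ^ i / qLaguerreMoment p x i *
      (s k ^ (i + l) * w k)‖ =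
      ‖qExpECoeff p i * (-R) ^ i / qLaguerreMoment p x i‖ * (s k ^ (i + l) * w k) := by
    rw [norm_mul, Real.norm_of_nonneg (h.pow_mul_weight_pos (i + l) k).le]
  rw [← summable_norm_iff, summable_prod_of_nonneg fun _ => norm_nonneg _]
  simp only [hnorm]
  refine ⟨fun i => (h.summable_pow_mul_weight (i + l)).mul_left _, ?_⟩
  simp only [tsum_mul_left, (h.hasSum_pow_mul_weight _).tsum_eq]
  simp only [← mul_assoc]
  refine Summable.mul_right _ (.of_nonneg_of_le (fun i => ?_)
    (fun i => norm_qBesselSeries_term_mul_moment_le h.base_pos h.base_lt_one h.param_pos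
      h.param_lt_one R i l)
    ((summable_qExpECoeff_mul_pow h.base_pos.le h.base_lt_one _).mul_left _))
  exact mul_nonneg (norm_nonneg _)
    (qLaguerreMoment_pos h.base_pos h.base_lt_one h.param_pos h.param_lt_one _).le

lemma hasSum_qBesselSeries_mul_qLaguerrePoly_mul_weight (h : IsQLaguerreWeight p x s w) (R : ℝ)
    (j : ℕ) :
    HasSum (fun k => qBesselSeries p x (R * s k) * qLaguerrePoly p x j (s k) * w k)
      ((R / p) ^ j / qFact p j * qExpE p (-R) * ∑' k, w k) := by
  have hp : 1 - p ≠ 0 := (sub_pos.mpr h.base_lt_one).ne'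
  set F : ℕ × ℤ → ℝ := fun ik => qExpECoeff p ik.1 * (-R) ^ ik.1 / qLaguerreMoment p x ik.1 *
    (s ik.2 ^ ik.1 * qLaguerrePoly p x j (s ik.2) * w ik.2) with hF
  have hsummable : Summable F := by
    refine (summable_sum fun lm (_ : lm ∈ antidiagonal j) =>
      (h.summable_qBesselSeries_term_mul_pow_mul_weight R lm.1).mul_left
        (qLaguerrePolyCoeff p x lm)).congr fun ik => ?_
    simp only [hF, qLaguerrePoly, Finset.mul_sum, Finset.sum_mul]
    exact Finset.sum_congr rfl fun lm _ => by ring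
  have hrow (i : ℕ) : HasSum (fun k => F (i, k))
      ((∑' k, w k) / ((1 - p) ^ j * qFact p j) *
        (qExpECoeff p i * (-R) ^ i * qPoch (p ^ i)⁻¹ p j)) := by
    have hmoment :=
      (qLaguerreMoment_pos h.base_pos h.base_lt_one h.param_pos h.param_lt_one i).ne'
    convert! (h.hasSum_pow_mul_qLaguerrePoly_mul_weight i j).mul_left
      (qExpECoeff p i * (-R) ^ i / qLaguerreMoment p x i) using 1
    field_simp
  have hcolumn (k : ℤ) : ∑' i, F (i, k) =
      qBesselSeries p x (R * s k) * qLaguerrePoly p x j (s k) * w k := by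
    rw [qBesselSeries, ← tsum_mul_right, ← tsum_mul_right]
    refine tsum_congr fun i => ?_
    simp only [hF, ← neg_mul, mul_pow]
    ring
  simp only [← hcolumn]
  convert! hasSum_tsum_of_hasSum_prod hsummable hrow
    ((hasSum_qExpECoeff_mul_qPoch h.base_pos h.base_lt_one j R).mul_left _) using 1
  rw [mul_pow, div_pow, div_pow]
  field_simp

end IsQLaguerreWeight

section Specialisation

variable {q ν : ℝ}

lemma sq_rpow (hq0 : 0 ≤ q) (a : ℝ) : (q ^ 2) ^ a = q ^ (2 * a) := by
  rw [← Real.rpow_natCast_mul hq0, Nat.cast_ofNat]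

lemma sq_pow_eq_rpow (q : ℝ) (n : ℕ) : (q ^ 2) ^ n = q ^ (2 * (n : ℝ)) := by
  rw [← pow_mul, ← Real.rpow_natCast, Nat.cast_mul, Nat.cast_ofNat]

lemma rpow_two_mul_mul_add (hq0 : 0 < q) (ν : ℝ) (i : ℕ) :
    q ^ (2 * (i : ℝ) * ((i : ℝ) + ν)) =
      ((q ^ 2) ^ (ν + 1)) ^ i * ((q ^ 2) ^ i.choose 2) ^ 2 := by
  have hchoose : 2 * (i.choose 2 : ℝ) + i = i * i := mod_cast two_mul_choose_two_add_self i
  rw [← pow_mul (q ^ 2), sq_pow_eq_rpow, sq_rpow hq0.le, ← Real.rpow_mul_natCast hq0.le,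
    ← Real.rpow_add hq0]
  congr 1
  push_cast
  linear_combination -2 * hchoose

lemma qBessel2_eq (hq0 : 0 < q) (hq1 : q < 1) (hν : -1 < ν) (y : ℝ) :
    qBessel2 q ν y = q ^ (ν ^ 2) * (y / (1 + q)) ^ ν / qGamma (q ^ 2) (ν + 1) *
      qBesselSeries (q ^ 2) ((q ^ 2) ^ (ν + 1)) ((y / (1 + q)) ^ 2) := by
  have hp0 : 0 < q ^ 2 := pow_pos hq0 2
  have hp1 : q ^ 2 < 1 := pow_lt_one₀ hq0.le hq1 two_ne_zero
  rw [qBessel2, qBesselSeries, div_mul_eq_mul_div, mul_div_assoc, ← tsum_div_const]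
  congr 1
  refine tsum_congr fun i => ?_
  rw [rpow_two_mul_mul_add hq0, show (i : ℝ) + ν + 1 = ν + 1 + i by ring,
    qGamma_add_natCast hp0 hp1 (by linarith), qExpECoeff, qLaguerreMoment, neg_pow, pow_mul]
  simp only [div_eq_mul_inv, mul_inv, inv_inv]
  ring

lemma qBessel2_mul_div_rpow (hq0 : 0 < q) (hq1 : q < 1) (hν : -1 < ν) {r t : ℝ} (hr : 0 < r)
    (ht : 0 < t) :
    qBessel2 q ν (q * (r * t)) / (r * t) ^ ν =
      q ^ (ν ^ 2) * q ^ ν / ((1 + q) ^ ν * qGamma (q ^ 2) (ν + 1)) *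
        qBesselSeries (q ^ 2) ((q ^ 2) ^ (ν + 1))
          (r ^ 2 / (1 + q) * (q ^ 2 * t ^ 2 / (1 + q))) := by
  have hrt : 0 < r * t := mul_pos hr ht
  have hpow : (r * t) ^ ν ≠ 0 := (Real.rpow_pos_of_pos hrt ν).ne'
  have harg : (q * (r * t) / (1 + q)) ^ 2 = r ^ 2 / (1 + q) * (q ^ 2 * t ^ 2 / (1 + q)) := by ring
  rw [qBessel2_eq hq0 hq1 hν, harg, Real.div_rpow (by positivity) (by positivity),
    Real.mul_rpow hq0.le hrt.le]
  field_simp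

lemma qLaguerreInv_eq (hq0 : 0 < q) (ν : ℝ) (j : ℕ) (u : ℝ) :
    qLaguerreInv q ν j u = q ^ (-(j : ℝ) * ((j : ℝ) + 1 + 2 * ν)) *
      qLaguerrePoly (q ^ 2) ((q ^ 2) ^ (ν + 1)) j u := by
  rw [qLaguerreInv, qLaguerrePoly, Finset.Nat.sum_antidiagonal_eq_sum_range_succ_mk]
  congr 1
  refine Finset.sum_congr rfl fun l _ => ?_
  have hbase : q ^ (2 * (l : ℝ) + 2 * ν + 2) = (q ^ 2) ^ (ν + 1) * (q ^ 2) ^ l := by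
    rw [sq_rpow hq0.le, sq_pow_eq_rpow, ← Real.rpow_add hq0]
    ring_nf
  rw [rpow_two_mul_mul_add hq0, hbase, qLaguerrePolyCoeff, qExpECoeff, neg_pow u,
    neg_pow ((q ^ 2) ^ (ν + 1))]
  ring

lemma isQLaguerreWeight_jackson (hq0 : 0 < q) (hq1 : q < 1) (hν : -1 < ν) {c γ : ℝ} (hc : 0 < c)
    (hγ : 0 < γ) :
    IsQLaguerreWeight (q ^ 2) ((q ^ 2) ^ (ν + 1)) (fun k => c * (q ^ k * γ) ^ 2)
      (fun k => (q ^ k * γ) ^ (2 * ν + 1) * qExpe (q ^ 2) (c * (q ^ k * γ) ^ 2) * q ^ k) := by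
  have hp0 : 0 < q ^ 2 := pow_pos hq0 2
  have hp1 : q ^ 2 < 1 := pow_lt_one₀ hq0.le hq1 two_ne_zero
  have hpoint (k : ℤ) : 0 < q ^ k * γ := mul_pos (zpow_pos hq0 k) hγ
  have hnode (k : ℤ) : 0 < c * (q ^ k * γ) ^ 2 := mul_pos hc (pow_pos (hpoint k) 2)
  have hpoint_succ (k : ℤ) : q ^ (k + 1) * γ = q * (q ^ k * γ) := by
    rw [zpow_add_one₀ hq0.ne']; ring
  have hnode_succ (k : ℤ) : c * (q ^ (k + 1) * γ) ^ 2 = q ^ 2 * (c * (q ^ k * γ) ^ 2) := by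
    rw [hpoint_succ]; ring
  have hparam : (q ^ 2) ^ (ν + 1) = q ^ (2 * ν + 1) * q := by
    rw [sq_rpow hq0.le, ← Real.rpow_add_one hq0.ne']; ring_nf
  refine ⟨hp0, hp1, Real.rpow_pos_of_pos hp0 _, Real.rpow_lt_one hp0.le hp1 (by linarith), hnode,
    fun k => ?_, hnode_succ, fun k => ?_⟩
  · have hexp : 0 < qExpe (q ^ 2) (c * (q ^ k * γ) ^ 2) :=
      inv_pos.mpr (qExpE_pos hp0.le hp1 (hnode k).le)
    exact mul_pos (mul_pos (Real.rpow_pos_of_pos (hpoint k) _) hexp) (zpow_pos hq0 k)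
  · rw [hnode_succ, qExpe_mul_eq hp0.le hp1 (hnode k).le, hpoint_succ,
      Real.mul_rpow hq0.le (hpoint k).le, hparam, zpow_add_one₀ hq0.ne']
    ring

lemma rpow_mul_rpow_mul_rpow_div_sq_pow (hq0 : 0 < q) (ν : ℝ) (j : ℕ) :
    q ^ (ν ^ 2) * q ^ ν * q ^ (-(j : ℝ) * ((j : ℝ) + 1 + 2 * ν)) / (q ^ 2) ^ j =
      q ^ ((ν + 1) * (ν + 2)) * q ^ (-((j : ℝ) + 1) * ((j : ℝ) + 2 * ν + 2)) := by
  rw [sq_pow_eq_rpow, ← Real.rpow_add hq0, ← Real.rpow_add hq0, ← Real.rpow_add hq0,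
    ← Real.rpow_sub hq0]
  ring_nf

end Specialisation

/-- second q-Hankel image of a q-Laguerre function: for `ν > -1`, `j ∈ ℕ`,
`γ > 0`, `r > 0`, the bilateral series defining the infinite Jackson integral converges
absolutely and
`∫_0^{γ·∞} d_q t (J^{(2)}_ν(qrt|q²)/(rt)^ν) t^{2ν+1} 𝓛^{(ν)}_j(q²t²/(1+q)|q^{-2})
  e_{q²}(-q²t²/(1+q)) = d (q^{-(j+1)(j+2ν+2)}/[j]_{q²}!) (r^{2j}/(1+q)^j) E_{q²}(-r²/(1+q))`,
where `d = (q^{(ν+1)(ν+2)}/((1+q)^ν Γ_{q²}(ν+1))) ∫_0^{γ·∞} d_q t t^{2ν+1} e_{q²}(-q²t²/(1+q))`. -/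
theorem hankel2_qLaguerre (q : ℝ) (hq0 : 0 < q) (hq1 : q < 1)
    (ν : ℝ) (hν : ν > -1) (j : ℕ) (γ : ℝ) (hγ : 0 < γ) (r : ℝ) (hr : 0 < r) :
    let F : ℝ → ℝ := fun t => qBessel2 q ν (q * (r * t)) / (r * t) ^ ν * t ^ (2 * ν + 1) *
      (qLaguerreInv q ν j (q ^ 2 * t ^ 2 / (1 + q)) * qExpe (q ^ 2) (q ^ 2 * t ^ 2 / (1 + q)))
    Summable (fun k : ℤ => F (q ^ k * γ) * q ^ k) ∧
    jacksonInf q γ F =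
      (q ^ ((ν + 1) * (ν + 2)) / ((1 + q) ^ ν * qGamma (q ^ 2) (ν + 1)) *
        jacksonInf q γ (fun t => t ^ (2 * ν + 1) * qExpe (q ^ 2) (q ^ 2 * t ^ 2 / (1 + q)))) *
      (q ^ (-((j : ℝ) + 1) * ((j : ℝ) + 2 * ν + 2)) / qFact (q ^ 2) j) *
      (r ^ (2 * j) / (1 + q) ^ j) * qExpE (q ^ 2) (-(r ^ 2 / (1 + q))) := by
  intro F
  have hweight := isQLaguerreWeight_jackson hq0 hq1 hν (c := q ^ 2 / (1 + q)) (by positivity) hγ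
  simp only [div_mul_eq_mul_div] at hweight
  have hsum := (hweight.hasSum_qBesselSeries_mul_qLaguerrePoly_mul_weight
    (r ^ 2 / (1 + q)) j).mul_left (q ^ (ν ^ 2) * q ^ ν / ((1 + q) ^ ν * qGamma (q ^ 2) (ν + 1)) *
      q ^ (-(j : ℝ) * ((j : ℝ) + 1 + 2 * ν)))
  have hF : HasSum (fun k : ℤ => F (q ^ k * γ) * q ^ k) _ := hsum.congr_fun fun k => by
    simp only [F]
    rw [qBessel2_mul_div_rpow hq0 hq1 hν hr (by positivity), qLaguerreInv_eq hq0]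
    ring
  refine ⟨hF.summable, ?_⟩
  rw [jacksonInf, jacksonInf, hF.tsum_eq, div_pow, div_pow, ← pow_mul]
  linear_combination (1 - q) * γ / ((1 + q) ^ ν * qGamma (q ^ 2) (ν + 1)) *
    (r ^ (2 * j) / (1 + q) ^ j / qFact (q ^ 2) j * qExpE (q ^ 2) (-(r ^ 2 / (1 + q)))) *
    (∑' k : ℤ, (q ^ k * γ) ^ (2 * ν + 1) *
      qExpe (q ^ 2) (q ^ 2 * (q ^ k * γ) ^ 2 / (1 + q)) * q ^ k) *
    rpow_mul_rpow_mul_rpow_div_sq_pow hq0 ν j
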